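/- Let N ≥ 1, k ≥ 1, let t₀ < t₁ be real numbers, let ω₀ ⊂ ℝ^N be a nonempty open set, and let g : ℝ × ℝ^N → ℝ^N be a C^k map such that g(t, x) ≠ 0 for every (t, x) ∈ (t₀, t₁) × ω₀. Then there exist a nonempty open set U ⊂ ℝ^{N−1}, a real number ε > 0, and a map Λ : (t₀, t₁) × (0, ε) × U → ℝ × ℝ^N such that: (i) Λ is a C^k diffeomorphism onto an open subset of (t₀, t₁) × ω₀; (ii) the time component of Λ(t, s, z) equals t for every (t, s, z); and (iii) for every C¹ function y : ℝ × ℝ^N → ℝ and every (t, s, z) ∈ (t₀, t₁) × (0, ε) × U, ∂_s (y ∘ Λ)(t, s, z) = g(Λ(t, s, z)) · ∇_x y(Λ(t, s, z)), where ∇_x denotes the gradient in the space variables. -/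

import Mathlib

open Real

/-!
Multiply `g` by a cutoff, so that it is bounded and Lipschitz, and let `φ` be the flow of
`(t, x) ↦ (0, g (t, x))`; it is as smooth as `g` because the solution curves are fixed points of a
smooth family of Picard contractions. With `v t = g (t, x₀)` and `A t` a smooth frame of a
complement of `ℝ ∙ v t`, put `Λ (t, s, z) = φ_s (t, x₀ + A_t z)`.

Since `v t` may tend to `0` at the ends of the time interval, a domain of `(s, z)` independent of
`t` is obtained by scaling: `A t` has the size of `v t`, and Gronwall's inequality then gives
`‖Λ (t, s, z) - (t, x₀)‖ ≤ c ‖v t‖` with `c` small. The Lipschitz bound keeps `g (Λ (t, s, z))` so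
close to `v t` that the coordinate along `v t` increases strictly along the flow lines. Hence no
flow line meets a slice `x₀ + range A_t` twice in the box, and `Λ` is injective and immersive.
-/

open Set Topology
open scoped NNReal

universe u

section Superposition

/-- The bilinear map sending a continuous family of operators `A` and a continuous curve `h` to
`x ↦ A x (h x)`; it turns `DF ∘ u` into the derivative at `u` of the superposition operator
`u ↦ F ∘ u`. -/
noncomputable def pointwiseApply (X E G : Type*) [TopologicalSpace X] [CompactSpace X]
    [NormedAddCommGroup E] [NormedSpace ℝ E] [NormedAddCommGroup G] [NormedSpace ℝ G] :
    C(X, E →L[ℝ] G) →L[ℝ] C(X, E) →L[ℝ] C(X, G) :=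
  LinearMap.mkContinuous₂
    (LinearMap.mk₂ ℝ (fun (A : C(X, E →L[ℝ] G)) (h : C(X, E)) =>
        (⟨fun x => A x (h x), by fun_prop⟩ : C(X, G)))
      (fun _ _ _ => by ext; simp) (fun _ _ _ => by ext; simp)
      (fun _ _ _ => by ext; simp) (fun _ _ _ => by ext; simp))
    1 fun A h => by
      rw [one_mul, ContinuousMap.norm_le _ (by positivity)]
      exact fun x => (A x).le_of_opNorm_le_of_le (A.norm_coe_le_norm x) (h.norm_coe_le_norm x)

variable {X : Type*} [TopologicalSpace X] [CompactSpace X]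

theorem exists_forall_ball_norm_comp_sub_le {E H : Type*} [NormedAddCommGroup E]
    [NormedAddCommGroup H] (F : C(E, H)) (u : C(X, E)) {c : ℝ} (hc : 0 < c) :
    ∃ δ > 0, ∀ x, ∀ y ∈ Metric.ball (u x) δ, ‖F y - F (u x)‖ ≤ c := by
  obtain ⟨δ, hδ, hF⟩ := Metric.continuous_iff.1 (ContinuousMap.continuous_postcomp F) u c hc
  refine ⟨δ, hδ, fun x y hy => ?_⟩
  let v : C(X, E) := u + ContinuousMap.const X (y - u x)
  have hv : dist v u < δ := by
    rw [dist_eq_norm, add_sub_cancel_left]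
    exact ((ContinuousMap.norm_le _ (norm_nonneg _)).2 fun _ => le_rfl).trans_lt
      (mem_ball_iff_norm.1 hy)
  have hFv := ((F.comp v - F.comp u).norm_coe_le_norm x).trans
    (dist_eq_norm (F.comp v) _ ▸ hF v hv).le
  simpa [v] using hFv

variable {E G : Type*} [NormedAddCommGroup E] [NormedSpace ℝ E]
  [NormedAddCommGroup G] [NormedSpace ℝ G]

theorem hasFDerivAt_continuousMap_comp (F : C(E, G)) (F' : C(E, E →L[ℝ] G))
    (hF : ∀ x, HasFDerivAt F (F' x) x) (u : C(X, E)) :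
    HasFDerivAt (fun u : C(X, E) => F.comp u) (pointwiseApply X E G (F'.comp u)) u := by
  rw [hasFDerivAt_iff_isLittleO_nhds_zero, Asymptotics.isLittleO_iff]
  intro c hc
  obtain ⟨δ, hδ, hF'⟩ := exists_forall_ball_norm_comp_sub_le F' u hc
  filter_upwards [Metric.ball_mem_nhds 0 hδ] with h hh
  rw [ContinuousMap.norm_le _ (by positivity)]
  intro x
  change ‖F (u x + h x) - F (u x) - F' (u x) (h x)‖ ≤ _
  have hx : u x + h x ∈ Metric.ball (u x) δ := by
    simpa using (h.norm_coe_le_norm x).trans_lt (mem_ball_zero_iff.1 hh)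
  calc ‖F (u x + h x) - F (u x) - F' (u x) (h x)‖
      ≤ c * ‖h x‖ := by
        simpa using (convex_ball (u x) δ).norm_image_sub_le_of_norm_hasFDerivWithin_le'
          (fun y _ => (hF y).hasFDerivWithinAt) (hF' x) (Metric.mem_ball_self hδ) hx
    _ ≤ c * ‖h‖ := by gcongr; exact h.norm_coe_le_norm x

theorem contDiff_continuousMap_comp {n : ℕ∞} {E G : Type u} [NormedAddCommGroup E]
    [NormedSpace ℝ E] [NormedAddCommGroup G] [NormedSpace ℝ G] (F : C(E, G))
    (hF : ContDiff ℝ n F) : ContDiff ℝ n (fun u : C(X, E) => F.comp u) := by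
  rw [contDiff_iff_forall_nat_le]
  intro m hm
  replace hF : ContDiff ℝ m F := hF.of_le (by exact_mod_cast hm)
  clear hm
  induction m generalizing G with
  | zero => exact contDiff_zero.2 (ContinuousMap.continuous_postcomp F)
  | succ m ih =>
    obtain ⟨F', hF', hd⟩ := contDiff_succ_iff_hasFDerivAt.1 hF
    exact contDiff_succ_iff_hasFDerivAt.2 ⟨_,
      (pointwiseApply X E G).contDiff.comp (ih ⟨F', hF'.continuous⟩ hF'),
      hasFDerivAt_continuousMap_comp F ⟨F', hF'.continuous⟩ hd⟩

end Superposition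

section FixedPoint

variable {P Y : Type*} [NormedAddCommGroup P] [NormedSpace ℝ P] [CompleteSpace P]
  [NormedAddCommGroup Y] [NormedSpace ℝ Y] [CompleteSpace Y]

theorem isInvertible_one_sub_of_norm_lt_one {B : Y →L[ℝ] Y} (hB : ‖B‖ < 1) :
    (1 - B).IsInvertible :=
  ⟨ContinuousLinearEquiv.unitsEquiv ℝ Y (Units.oneSub B hB), rfl⟩

theorem contDiffAt_of_isFixedPt_contractingWith {n : WithTop ℕ∞} (hn : n ≠ 0) {f : P × Y → Y}
    {u : P → Y} {q : P} (hf : ContDiffAt ℝ n f (q, u q))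
    (hc : ∀ᶠ x in 𝓝 q, ∃ K, ContractingWith K fun y => f (x, y))
    (hu : ∀ᶠ x in 𝓝 q, Function.IsFixedPt (fun y => f (x, y)) (u x)) :
    ContDiffAt ℝ n u q := by
  let Ψ : P × Y → Y := fun w => w.2 - f w
  have hΨ : ContDiffAt ℝ n Ψ (q, u q) := contDiffAt_snd.sub hf
  have hΨ_zero : Ψ (q, u q) = 0 := sub_eq_zero.2 hu.self_of_nhds.symm
  have hinv : (fderiv ℝ Ψ (q, u q) ∘L .inr ℝ P Y).IsInvertible := by
    obtain ⟨K, hK⟩ := hc.self_of_nhds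
    have hB := (hf.differentiableAt hn).hasFDerivAt.comp (u q) (hasFDerivAt_prodMk_right q (u q))
    have hΨ' := (hΨ.differentiableAt hn).hasFDerivAt.comp (u q) (hasFDerivAt_prodMk_right q (u q))
    rw [hΨ'.unique ((hasFDerivAt_id (u q)).sub hB)]
    refine isInvertible_one_sub_of_norm_lt_one (lt_of_le_of_lt ?_ (NNReal.coe_lt_coe.2 hK.1))
    exact hB.le_of_lipschitz hK.2
  refine (hΨ.contDiffAt_implicitFunction hn hinv).congr_of_eventuallyEq ?_
  filter_upwards [hΨ.eventually_apply_implicitFunction hn hinv, hc, hu] with x hx ⟨K, hK⟩ hux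
  exact hK.fixedPoint_unique' hux (sub_eq_zero.1 (hx.trans hΨ_zero)).symm

end FixedPoint

section PicardOperator

open unitInterval

theorem lipschitzWith_continuousMap_comp {X E G : Type*} [TopologicalSpace X] [CompactSpace X]
    [PseudoMetricSpace E] [PseudoMetricSpace G] {F : C(E, G)} {K : ℝ≥0} (hK : LipschitzWith K F) :
    LipschitzWith K fun u : C(X, E) => F.comp u :=
  LipschitzWith.of_dist_le_mul fun u v => (ContinuousMap.dist_le (by positivity)).2 fun x =>
    (hK.dist_le_mul _ _).trans (by gcongr; exact ContinuousMap.dist_apply_le_dist x)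

variable {E : Type*} [NormedAddCommGroup E] [NormedSpace ℝ E]

/-- The operator `u ↦ (τ ↦ ∫₀^τ u)` on continuous curves parametrised by `[0, 1]`. -/
noncomputable def primitive (E : Type*) [NormedAddCommGroup E] [NormedSpace ℝ E] :
    C(I, E) →L[ℝ] C(I, E) :=
  have hint (u : C(I, E)) (a b : ℝ) :
      IntervalIntegrable (IccExtend zero_le_one u) MeasureTheory.volume a b :=
    u.continuous.Icc_extend'.intervalIntegrable a b
  LinearMap.mkContinuous
    { toFun := fun u => ⟨fun τ => ∫ r in (0 : ℝ)..τ, IccExtend zero_le_one u r,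
        (intervalIntegral.continuous_primitive (hint u) 0).comp continuous_subtype_val⟩
      map_add' := fun u v => ContinuousMap.ext fun τ =>
        intervalIntegral.integral_add (hint u 0 τ) (hint v 0 τ)
      map_smul' := fun c u => ContinuousMap.ext fun τ =>
        intervalIntegral.integral_smul c (IccExtend zero_le_one u) }
    1 fun u => by
      rw [one_mul, ContinuousMap.norm_le _ (norm_nonneg u)]
      refine fun τ => (intervalIntegral.norm_integral_le_of_norm_le_const
        fun x _ => u.norm_coe_le_norm _).trans ?_
      rw [sub_zero, abs_of_nonneg τ.2.1]
      exact mul_le_of_le_one_right (norm_nonneg u) τ.2.2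

theorem norm_primitive_le : ‖primitive E‖ ≤ 1 := by
  unfold primitive
  exact LinearMap.mkContinuous_norm_le _ zero_le_one _

/-- The Picard operator of the autonomous equation `u' = F u`, for the solution starting at `q.2`
and run at speed `q.1`, so that a fixed point on `[0, 1]` is a solution on `[0, q.1]`. -/
noncomputable def picardOperator (F : C(E, E)) (w : (ℝ × E) × C(I, E)) : C(I, E) :=
  ContinuousMap.const I w.1.2 + w.1.1 • primitive E (F.comp w.2)

theorem contractingWith_picardOperator {F : C(E, E)} {K : ℝ≥0} (hK : LipschitzWith K F)
    {q : ℝ × E} (hq : |q.1| * K < 1) :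
    ContractingWith (‖q.1‖₊ * K) fun u => picardOperator F (q, u) := by
  refine ⟨NNReal.coe_lt_coe.1 hq, LipschitzWith.of_dist_le_mul fun u v => ?_⟩
  calc dist (picardOperator F (q, u)) (picardOperator F (q, v))
      = |q.1| * ‖primitive E (F.comp u - F.comp v)‖ := by
        rw [dist_eq_norm, picardOperator, picardOperator, add_sub_add_left_eq_sub, ← smul_sub,
          ← map_sub, norm_smul, Real.norm_eq_abs]
    _ ≤ |q.1| * (1 * (K * dist u v)) := by
        gcongr
        refine ContinuousLinearMap.le_of_opNorm_le_of_le _ norm_primitive_le ?_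
        rw [← dist_eq_norm]
        exact (lipschitzWith_continuousMap_comp hK).dist_le_mul u v
    _ = ‖q.1‖₊ * K * dist u v := by rw [one_mul, mul_assoc, coe_nnnorm, Real.norm_eq_abs]

theorem contDiff_picardOperator {E : Type u} [NormedAddCommGroup E] [NormedSpace ℝ E] {n : ℕ∞}
    {F : C(E, E)} (hF : ContDiff ℝ n F) : ContDiff ℝ n (picardOperator F) := by
  have hcomp := contDiff_continuousMap_comp (X := I) F hF
  have hconst : ContDiff ℝ n fun w : (ℝ × E) × C(I, E) => ContinuousMap.const I w.1.2 :=
    (ContinuousLinearMap.const ℝ I : E →L[ℝ] C(I, E)).contDiff.comp (contDiff_snd.comp contDiff_fst)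
  exact hconst.add ((contDiff_fst.comp contDiff_fst).smul
    ((primitive E).contDiff.comp (hcomp.comp contDiff_snd)))

end PicardOperator

section Flow

variable {E : Type u} [NormedAddCommGroup E] [NormedSpace ℝ E]

open scoped Manifold in
theorem exists_isIntegralCurve_of_lipschitzWith_of_norm_le [CompleteSpace E] {F : E → E}
    {K M : ℝ≥0} (hF : ContDiff ℝ 1 F) (hK : LipschitzWith K F) (hM : ∀ x, ‖F x‖ ≤ M) (p : E) :
    ∃ γ : ℝ → E, γ 0 = p ∧ IsIntegralCurve γ fun _ => F := by
  obtain ⟨γ, hγ₀, hγ⟩ := (exists_isMIntegralCurve_iff_exists_isMIntegralCurveOn_Ioo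
    (I := 𝓘(ℝ, E)) (contMDiff_vectorSpace_iff_contDiff.2 hF) p).2 fun a => by
      have hzero : (0 : ℝ) ∈ Icc (-|a|) |a| := by simp
      obtain ⟨γ, hγ₀, hγ⟩ := (IsPicardLindelof.of_time_independent (t₀ := ⟨0, hzero⟩) (x₀ := p)
        (a := M * ‖a‖₊) (r := 0) (fun x _ => hM x) hK.lipschitzOnWith
        (by simp)).exists_eq_forall_mem_Icc_hasDerivWithinAt₀
      refine ⟨γ, hγ₀, fun t ht => HasFDerivWithinAt.hasMFDerivWithinAt ?_⟩
      have hsub : Ioo (-a) a ⊆ Icc (-|a|) |a| := fun r hr =>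
        abs_le.1 ((abs_lt.2 hr).le.trans (le_abs_self a))
      exact ((hγ t (hsub ht)).mono hsub).hasFDerivWithinAt
  exact ⟨γ, hγ₀, fun t => (hγ t).hasFDerivAt⟩

/-- `φ s p` is the value at time `s` of an integral curve of the autonomous vector field `F` that
is defined for all times and starts at `p`. -/
structure IsGlobalFlow (F : E → E) (φ : ℝ → E → E) : Prop where
  map_zero : ∀ p, φ 0 p = p
  isIntegralCurve : ∀ p, IsIntegralCurve (φ · p) fun _ => F

theorem exists_isGlobalFlow_of_lipschitzWith_of_norm_le [CompleteSpace E] {F : E → E}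
    {K M : ℝ≥0} (hF : ContDiff ℝ 1 F) (hK : LipschitzWith K F) (hM : ∀ x, ‖F x‖ ≤ M) :
    ∃ φ, IsGlobalFlow F φ := by
  choose γ hγ₀ hγ using exists_isIntegralCurve_of_lipschitzWith_of_norm_le hF hK hM
  exact ⟨fun s p => γ p s, hγ₀, hγ⟩

namespace IsGlobalFlow

variable {F : E → E} {φ : ℝ → E → E} {K : ℝ≥0}

theorem map_add (hφ : IsGlobalFlow F φ) (hK : LipschitzWith K F) (a b : ℝ) (p : E) :
    φ (a + b) p = φ a (φ b p) := by
  have hcurves : (fun r => φ (r + b) p) = (φ · (φ b p)) :=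
    ODE_solution_unique_univ (v := fun _ => F) (s := fun _ => univ) (t₀ := 0)
      (fun _ => hK.lipschitzOnWith)
      (fun r => ⟨(hφ.isIntegralCurve p).comp_add b r, mem_univ _⟩)
      (fun r => ⟨hφ.isIntegralCurve (φ b p) r, mem_univ _⟩) (by simp [hφ.map_zero])
  exact congrFun hcurves a

theorem map_eq_add_integral [CompleteSpace E] (hφ : IsGlobalFlow F φ) (hF : Continuous F)
    (s τ : ℝ) (p : E) : φ (τ * s) p = p + s • ∫ σ in (0 : ℝ)..τ, F (φ (σ * s) p) := by
  have hcurve := (hφ.isIntegralCurve p).comp_mul s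
  have hderiv : ∀ σ ∈ uIcc 0 τ, HasDerivAt (fun σ => φ (σ * s) p) (s • F (φ (σ * s) p)) σ :=
    fun σ _ => hcurve σ
  have hcont : Continuous fun σ => s • F (φ (σ * s) p) :=
    (hF.comp hcurve.continuous).const_smul s
  rw [← intervalIntegral.integral_smul, intervalIntegral.integral_eq_sub_of_hasDerivAt hderiv
    (hcont.intervalIntegrable 0 τ), zero_mul, hφ.map_zero, add_sub_cancel]

variable [CompleteSpace E]

open unitInterval in
theorem contDiffAt_uncurry_of_abs_mul_lt_one {n : ℕ∞} (hφ : IsGlobalFlow F φ) (hn : n ≠ 0)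
    (hF : ContDiff ℝ n F) (hK : LipschitzWith K F) {q : ℝ × E} (hq : |q.1| * K < 1) :
    ContDiffAt ℝ n (Function.uncurry φ) q := by
  let F' : C(E, E) := ⟨F, hF.continuous⟩
  let u : ℝ × E → C(I, E) := fun q =>
    ⟨fun τ => φ (τ * q.1) q.2, by
      exact ((hφ.isIntegralCurve q.2).comp_mul q.1).continuous.comp continuous_subtype_val⟩
  have hu (q : ℝ × E) : picardOperator F' (q, u q) = u q := by
    ext τ
    refine (congrArg (fun w => q.2 + q.1 • w) ?_).trans
      (hφ.map_eq_add_integral hF.continuous q.1 τ q.2).symm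
    refine intervalIntegral.integral_congr fun r hr => ?_
    rw [uIcc_of_le τ.2.1] at hr
    exact IccExtend_of_mem zero_le_one _ ⟨hr.1, hr.2.trans τ.2.2⟩
  have hcontr : ∀ᶠ x : ℝ × E in 𝓝 q, |x.1| * K < 1 :=
    (isOpen_lt (by fun_prop) continuous_const).mem_nhds hq
  have hsmooth : ContDiffAt ℝ n u q :=
    contDiffAt_of_isFixedPt_contractingWith (by exact_mod_cast hn)
      (contDiff_picardOperator hF).contDiffAt
      (hcontr.mono fun x hx => ⟨_, contractingWith_picardOperator hK hx⟩)
      (Filter.Eventually.of_forall hu)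
  have heval : Function.uncurry φ = fun q => ContinuousMap.evalCLM ℝ (1 : I) (u q) := by
    ext q : 1
    simp [u, Function.uncurry]
  rw [heval]
  exact (ContinuousMap.evalCLM ℝ (1 : I)).contDiff.contDiffAt.comp q hsmooth

theorem contDiff_uncurry {n : ℕ∞} (hφ : IsGlobalFlow F φ) (hn : n ≠ 0)
    (hF : ContDiff ℝ n F) (hK : LipschitzWith K F) : ContDiff ℝ n (Function.uncurry φ) := by
  suffices hpow : ∀ (m : ℕ) (q : ℝ × E), |q.1| * K < 2 ^ m →
      ContDiffAt ℝ n (Function.uncurry φ) q by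
    refine contDiff_iff_contDiffAt.2 fun q => ?_
    obtain ⟨m, hm⟩ := pow_unbounded_of_one_lt (|q.1| * K) one_lt_two
    exact hpow m q hm
  intro m
  induction m with
  | zero => exact fun q hq => hφ.contDiffAt_uncurry_of_abs_mul_lt_one hn hF hK (by simpa using hq)
  | succ m ih =>
    intro q hq
    have hhalf : |q.1 / 2| * K < 2 ^ m := by
      rw [abs_div, abs_two]
      rw [pow_succ] at hq
      linarith
    have hfst : ContDiffAt ℝ n (fun x : ℝ × E => x.1 / 2) q := contDiffAt_fst.div_const 2
    have hinner : ContDiffAt ℝ n (fun x : ℝ × E => φ (x.1 / 2) x.2) q :=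
      ContDiffAt.comp (g := Function.uncurry φ) q (ih (q.1 / 2, q.2) hhalf)
        (hfst.prodMk contDiffAt_snd)
    have hdouble : Function.uncurry φ =
        fun x => Function.uncurry φ (x.1 / 2, φ (x.1 / 2) x.2) := by
      ext x : 1
      simp [Function.uncurry, ← hφ.map_add hK]
    rw [hdouble]
    exact (ih (q.1 / 2, φ (q.1 / 2) q.2) hhalf).comp q (hfst.prodMk hinner)

end IsGlobalFlow

end Flow

section FlowEstimates

theorem gronwallBound_le_of_mul_le_one {δ K ε x : ℝ} (hδ : 0 ≤ δ) (hK : 0 ≤ K) (hε : 0 ≤ ε)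
    (hx : 0 ≤ x) (hKx : K * x ≤ 1) : gronwallBound δ K ε x ≤ 3 * δ + 2 * (ε * x) := by
  rcases hK.eq_or_lt with rfl | hK_pos
  · rw [gronwallBound_K0]
    nlinarith [mul_nonneg hε hx]
  have hKx_nonneg : 0 ≤ K * x := mul_nonneg hK hx
  have hexp : exp (K * x) - 1 ≤ 2 * (K * x) := by
    have := Real.abs_exp_sub_one_le (abs_le.2 ⟨by linarith, hKx⟩)
    rw [abs_of_nonneg hKx_nonneg] at this
    exact (le_abs_self _).trans this
  rw [gronwallBound_of_K_ne_0 hK_pos.ne']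
  calc δ * exp (K * x) + ε / K * (exp (K * x) - 1)
      ≤ δ * 3 + ε / K * (2 * (K * x)) := by gcongr; linarith
    _ = 3 * δ + 2 * (ε * x) := by field_simp

namespace IsGlobalFlow

variable {E : Type u} [NormedAddCommGroup E] [NormedSpace ℝ E]
  {F : E → E} {φ : ℝ → E → E} {K : ℝ≥0}

theorem norm_sub_le_gronwallBound (hφ : IsGlobalFlow F φ) (hK : LipschitzWith K F) {s : ℝ}
    (hs : 0 ≤ s) (p P : E) : ‖φ s p - P‖ ≤ gronwallBound ‖p - P‖ K ‖F P‖ s := by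
  have hderiv (r : ℝ) : HasDerivAt (fun r => φ r p - P) (F (φ r p)) r :=
    (hφ.isIntegralCurve p r).sub_const P
  have hbound (r : ℝ) : ‖F (φ r p)‖ ≤ K * ‖φ r p - P‖ + ‖F P‖ := by
    have := hK.norm_sub_le (φ r p) P
    linarith [norm_sub_norm_le (F (φ r p)) (F P)]
  simpa using norm_le_gronwallBound_of_norm_deriv_right_le (a := 0) (b := s)
    (HasDerivAt.continuousOn fun r _ => hderiv r) (fun r _ => (hderiv r).hasDerivWithinAt)
    (by rw [hφ.map_zero]) (fun r _ => hbound r) s (right_mem_Icc.2 hs)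

theorem hasFDerivAt_uncurry_zero (hφ : IsGlobalFlow F φ) {p : E}
    (hd : DifferentiableAt ℝ (Function.uncurry φ) (0, p)) :
    HasFDerivAt (Function.uncurry φ)
      ((ContinuousLinearMap.fst ℝ ℝ E).smulRight (F p) + ContinuousLinearMap.snd ℝ ℝ E) (0, p) := by
  convert hd.hasFDerivAt using 1
  have htime := hd.hasFDerivAt.comp_hasDerivAt 0 ((hasDerivAt_id (0 : ℝ)).prodMk
    (hasDerivAt_const 0 p))
  have hspace := hd.hasFDerivAt.comp p (hasFDerivAt_prodMk_right (0 : ℝ) p)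
  have hfield := (hφ.isIntegralCurve p 0).unique htime
  have hid := (hasFDerivAt_id p).unique
    (hspace.congr_of_eventuallyEq (Filter.Eventually.of_forall fun x => (hφ.map_zero x).symm))
  ext
  · simpa [hφ.map_zero] using hfield
  · simpa using DFunLike.congr_fun hid _

theorem smul_add_eq_zero_of_hasFDerivAt {X : Type*} [NormedAddCommGroup X] [NormedSpace ℝ X]
    (hφ : IsGlobalFlow F φ) (hK : LipschitzWith K F) (hd : Differentiable ℝ (Function.uncurry φ))
    {τ : X → ℝ} {σ : X → E} {τ' : X →L[ℝ] ℝ} {σ' L : X →L[ℝ] E} {x : X}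
    (hτ : HasFDerivAt τ τ' x) (hσ : HasFDerivAt σ σ' x)
    (hL : HasFDerivAt (fun w => φ (τ w) (σ w)) L x) {h : X} (hh : L h = 0) :
    τ' h • F (σ x) + σ' h = 0 := by
  have hstart : HasFDerivAt (fun w => φ (τ w - τ x) (σ w)) (τ'.smulRight (F (σ x)) + σ') x := by
    have hzero := hφ.hasFDerivAt_uncurry_zero (hd (0, σ x))
    rw [← sub_self (τ x)] at hzero
    exact HasFDerivAt.comp (g := Function.uncurry φ) x hzero ((hτ.sub_const (τ x)).prodMk hσ)
  have hback : HasFDerivAt (fun w => φ (-τ x) (φ (τ w) (σ w)))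
      ((fderiv ℝ (Function.uncurry φ) (-τ x, φ (τ x) (σ x)) ∘L .inr ℝ ℝ E) ∘L L) x :=
    ((hd _).hasFDerivAt.comp _ (hasFDerivAt_prodMk_right _ _)).comp x hL
  have heq : (fun w => φ (τ w - τ x) (σ w)) = fun w => φ (-τ x) (φ (τ w) (σ w)) :=
    funext fun w => by rw [← hφ.map_add hK, sub_eq_neg_add]
  have := DFunLike.congr_fun (hstart.unique (heq ▸ hback)) h
  simpa [hh, Prod.mk_zero_zero] using this

end IsGlobalFlow

end FlowEstimates

section InverseFunction

variable {X Y : Type*} [NormedAddCommGroup X] [NormedSpace ℝ X]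
  [NormedAddCommGroup Y] [NormedSpace ℝ Y]

theorem isInvertible_of_injective_of_finrank_eq [FiniteDimensional ℝ X]
    [FiniteDimensional ℝ Y] (hXY : Module.finrank ℝ X = Module.finrank ℝ Y)
    {L : X →L[ℝ] Y} (hL : Function.Injective L) : L.IsInvertible :=
  ⟨(LinearEquiv.ofInjectiveOfFinrankEq (L : X →ₗ[ℝ] Y) hL hXY).toContinuousLinearEquiv, rfl⟩

variable [CompleteSpace X] {n : WithTop ℕ∞}

theorem exists_contDiffAt_eventually_rightInverse (hn : n ≠ 0) {f : X → Y} {S : Set X} {x : X}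
    (hS : S ∈ 𝓝 x) (hf : ContDiffAt ℝ n f x) (hf' : (fderiv ℝ f x).IsInvertible) :
    ∃ ψ : Y → X, ContDiffAt ℝ n ψ (f x) ∧ ∀ᶠ y in 𝓝 (f x), ψ y ∈ S ∧ f (ψ y) = y := by
  obtain ⟨e, he⟩ := hf'
  have hfe : HasFDerivAt f (e : X →L[ℝ] Y) x := he ▸ (hf.differentiableAt hn).hasFDerivAt
  have hψ := hf.to_localInverse hfe hn
  have htendsto : Filter.Tendsto (hf.localInverse hfe hn) (𝓝 (f x)) (𝓝 x) := by
    simpa only [ContinuousAt, hf.localInverse_apply_image hfe hn] using hψ.continuousAt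
  exact ⟨hf.localInverse hfe hn, hψ, (htendsto.eventually hS).and
    (hf.hasStrictFDerivAt' hfe hn).eventually_right_inverse⟩

theorem isOpen_image_and_exists_contDiffOn_leftInvOn (hn : n ≠ 0) {f : X → Y} {S : Set X}
    (hS : IsOpen S) (hf : ContDiffOn ℝ n f S) (hinj : InjOn f S)
    (hf' : ∀ x ∈ S, (fderiv ℝ f x).IsInvertible) :
    IsOpen (f '' S) ∧ ∃ Φ, ContDiffOn ℝ n Φ (f '' S) ∧ LeftInvOn Φ f S := by
  have hloc (x) (hx : x ∈ S) := exists_contDiffAt_eventually_rightInverse hn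
    (hS.mem_nhds hx) (hf.contDiffAt (hS.mem_nhds hx)) (hf' x hx)
  refine ⟨isOpen_iff_mem_nhds.2 ?_, Function.invFunOn f S, ?_, hinj.leftInvOn_invFunOn⟩
  · rintro _ ⟨x, hx, rfl⟩
    obtain ⟨ψ, -, hψ⟩ := hloc x hx
    exact hψ.mono fun y hy => ⟨ψ y, hy⟩
  · rintro _ ⟨x, hx, rfl⟩
    obtain ⟨ψ, hψ_smooth, hψ⟩ := hloc x hx
    refine (hψ_smooth.congr_of_eventuallyEq (hψ.mono fun y hy => ?_)).contDiffWithinAt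
    conv_lhs => rw [← hy.2]
    exact hinj.leftInvOn_invFunOn hy.1

end InverseFunction

section Frame

open Module

theorem exists_norm_eq_one_forall_smul_ne {X E : Type*} [NormedAddCommGroup X] [NormedSpace ℝ X]
    [FiniteDimensional ℝ X] [NormedAddCommGroup E] [NormedSpace ℝ E] [FiniteDimensional ℝ E]
    {v : X → E} (hv : ContDiff ℝ 1 v) (hXE : finrank ℝ X + 1 < finrank ℝ E) :
    ∃ e : E, ‖e‖ = 1 ∧ ∀ (c : ℝ) x, c • v x ≠ e := by
  have hcone : ContDiff ℝ 1 fun q : ℝ × X => q.1 • v q.2 :=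
    contDiff_fst.smul (hv.comp contDiff_snd)
  have hdim : finrank ℝ (ℝ × X) < finrank ℝ E := by
    rwa [finrank_prod, finrank_self, add_comm]
  obtain ⟨e, he⟩ := (hcone.dense_compl_range_of_finrank_lt_finrank hdim).nonempty
  have he_ne : ‖e‖ ≠ 0 := fun h => he ⟨0, by simp [norm_eq_zero.1 h]⟩
  refine ⟨‖e‖⁻¹ • e, by simp [norm_smul, he_ne], fun c x hc => he ⟨(‖e‖ * c, x), ?_⟩⟩
  simp only [mul_smul, hc, smul_inv_smul₀ he_ne]

variable {E Z : Type*} [NormedAddCommGroup E] [InnerProductSpace ℝ E]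
  [NormedAddCommGroup Z] [NormedSpace ℝ Z] {n : WithTop ℕ∞}

theorem contDiffAt_reflection_orthogonal_span_singleton {X : Type*} [NormedAddCommGroup X]
    [NormedSpace ℝ X] {w : X → E} {x : X} (hw : ContDiffAt ℝ n w x) (hwx : w x ≠ 0) :
    ContDiffAt ℝ n (fun τ => ((ℝ ∙ w τ)ᗮ.reflection : E →L[ℝ] E)) x := by
  have hformula (τ : X) : ((ℝ ∙ w τ)ᗮ.reflection : E →L[ℝ] E) =
      .id ℝ E - (2 / ‖w τ‖ ^ 2) • (innerSL ℝ (w τ)).smulRight (w τ) := by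
    ext y
    simp [Submodule.reflection_orthogonal_apply, Submodule.reflection_singleton_apply, smul_smul,
      ← Nat.cast_smul_eq_nsmul ℝ, mul_div_assoc, div_mul_eq_mul_div]
  simp only [hformula]
  exact contDiffAt_const.sub ((contDiffAt_const.div (hw.norm_sq ℝ) (by positivity)).smul
    (((innerSL ℝ).contDiff.contDiffAt.comp x hw).smulRight hw))

/-- `A t` is an injective parametrization of a complement of the line through `v t`, as smooth as
the parameter `n` prescribes and of size at most comparable to `v t`; `ℓ t` is the coordinate along
`v t` in the resulting decomposition. Nothing is required where `v` vanishes. -/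
structure IsTransverseFrame {V Z : Type*} [NormedAddCommGroup V] [NormedSpace ℝ V]
    [NormedAddCommGroup Z] [NormedSpace ℝ Z] (n : WithTop ℕ∞) (v : ℝ → V) (A : ℝ → Z →L[ℝ] V)
    (ℓ : ℝ → V →L[ℝ] ℝ) (C : ℝ≥0) : Prop where
  contDiffAt : ∀ t, v t ≠ 0 → ContDiffAt ℝ n A t
  injective : ∀ t, v t ≠ 0 → Function.Injective (A t)
  norm_le : ∀ t, v t ≠ 0 → ‖A t‖ ≤ C * ‖v t‖
  coord_self : ∀ t, v t ≠ 0 → ℓ t (v t) = 1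
  coord_comp : ∀ t, v t ≠ 0 → ℓ t ∘L A t = 0
  norm_coord_mul_le : ∀ t, v t ≠ 0 → ‖ℓ t‖ * ‖v t‖ ≤ C

theorem isTransverseFrame_of_inner_eq_zero {v : ℝ → E} {A : ℝ → Z →L[ℝ] E} {C : ℝ≥0}
    (hsmooth : ∀ t, v t ≠ 0 → ContDiffAt ℝ n A t)
    (hinj : ∀ t, v t ≠ 0 → Function.Injective (A t))
    (hnorm : ∀ t, v t ≠ 0 → ‖A t‖ ≤ C * ‖v t‖)
    (horth : ∀ t, v t ≠ 0 → ∀ z, inner ℝ (v t) (A t z) = 0) :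
    IsTransverseFrame n v A (fun t => (‖v t‖ ^ 2)⁻¹ • innerSL ℝ (v t)) (max C 1) where
  contDiffAt := hsmooth
  injective := hinj
  norm_le t ht := (hnorm t ht).trans (by gcongr; exact le_max_left C 1)
  coord_self t ht := by
    simp [ht]
  coord_comp t ht := by
    ext z
    simp [horth t ht z]
  norm_coord_mul_le t ht := by
    have hunit : ‖(‖v t‖ ^ 2)⁻¹ • innerSL ℝ (v t)‖ * ‖v t‖ = 1 := by
      rw [norm_smul, innerSL_apply_norm, norm_inv, norm_pow, norm_norm]
      field_simp
    exact hunit.le.trans (by exact_mod_cast le_max_right C 1)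

theorem IsTransverseFrame.map {V : Type*} [NormedAddCommGroup V] [NormedSpace ℝ V]
    {E : Type*} [NormedAddCommGroup E] [NormedSpace ℝ E] {v : ℝ → E}
    {A : ℝ → Z →L[ℝ] E} {ℓ : ℝ → E →L[ℝ] ℝ} {C : ℝ≥0} (h : IsTransverseFrame n v A ℓ C)
    (e : E ≃L[ℝ] V) :
    IsTransverseFrame n (fun t => e (v t)) (fun t => (e : E →L[ℝ] V) ∘L A t)
      (fun t => ℓ t ∘L (e.symm : V →L[ℝ] E))
      (‖(e : E →L[ℝ] V)‖₊ * ‖(e.symm : V →L[ℝ] E)‖₊ * C) := by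
  have hne {t : ℝ} (ht : e (v t) ≠ 0) : v t ≠ 0 := fun h => ht (by simp [h])
  have hsymm (t : ℝ) : ‖v t‖ ≤ ‖(e.symm : V →L[ℝ] E)‖ * ‖e (v t)‖ := by
    simpa using (e.symm : V →L[ℝ] E).le_opNorm (e (v t))
  refine ⟨fun t ht => contDiffAt_const.clm_comp (h.contDiffAt t (hne ht)),
    fun t ht => e.injective.comp (h.injective t (hne ht)), fun t ht => ?_,
    fun t ht => by simpa using h.coord_self t (hne ht), fun t ht => ?_, fun t ht => ?_⟩
  · calc ‖(e : E →L[ℝ] V) ∘L A t‖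
        ≤ ‖(e : E →L[ℝ] V)‖ * (C * (‖(e.symm : V →L[ℝ] E)‖ * ‖e (v t)‖)) :=
          (ContinuousLinearMap.opNorm_comp_le _ _).trans
            (by gcongr; exact (h.norm_le t (hne ht)).trans (by gcongr; exact hsymm t))
      _ = _ := by push_cast; ring
  · ext z
    simpa using DFunLike.congr_fun (h.coord_comp t (hne ht)) z
  · calc ‖ℓ t ∘L (e.symm : V →L[ℝ] E)‖ * ‖e (v t)‖
        ≤ ‖ℓ t‖ * ‖(e.symm : V →L[ℝ] E)‖ * (‖(e : E →L[ℝ] V)‖ * ‖v t‖) := by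
          gcongr
          · exact ContinuousLinearMap.opNorm_comp_le _ _
          · exact (e : E →L[ℝ] V).le_opNorm (v t)
      _ = ‖(e : E →L[ℝ] V)‖ * ‖(e.symm : V →L[ℝ] E)‖ * (‖ℓ t‖ * ‖v t‖) := by ring
      _ ≤ _ := by push_cast; gcongr; exact h.norm_coord_mul_le t (hne ht)

variable {v : ℝ → E}

theorem exists_isTransverseFrame_of_finrank_eq_two (hv : ContDiff ℝ n v)
    (hE : finrank ℝ E = 2) (hZ : finrank ℝ Z = 1) :
    ∃ (A : ℝ → Z →L[ℝ] E) (ℓ : ℝ → E →L[ℝ] ℝ) (C : ℝ≥0), IsTransverseFrame n v A ℓ C := by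
  have : Fact (finrank ℝ E = 2) := ⟨hE⟩
  have : FiniteDimensional ℝ Z := .of_finrank_eq_succ hZ
  have : FiniteDimensional ℝ E := .of_finrank_eq_succ hE
  let J : E →L[ℝ] E := ((stdOrthonormalBasis ℝ E).toBasis.reindex
    (finCongr hE)).orientation.rightAngleRotation
  have hJ_inner (x : E) : inner ℝ x (J x) = 0 :=
    (real_inner_comm _ _).trans (Orientation.inner_rightAngleRotation_self _ x)
  have hJ_norm (x : E) : ‖J x‖ = ‖x‖ := LinearIsometryEquiv.norm_map _ x
  let c : Z ≃L[ℝ] ℝ := .ofFinrankEq (by rw [hZ, finrank_self])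
  refine ⟨fun t => (c : Z →L[ℝ] ℝ).smulRight (J (v t)), _, _, isTransverseFrame_of_inner_eq_zero
    (C := ‖(c : Z →L[ℝ] ℝ)‖₊) (fun t _ => ?_) (fun t ht => ?_) (fun t _ => ?_) (fun t _ z => ?_)⟩
  · exact contDiffAt_const.smulRight (J.contDiff.comp hv).contDiffAt
  · have hJ_ne : J (v t) ≠ 0 := by rwa [← norm_ne_zero_iff, hJ_norm, norm_ne_zero_iff]
    exact (smul_left_injective ℝ hJ_ne).comp c.injective
  · rw [ContinuousLinearMap.norm_smulRight_apply, hJ_norm, coe_nnnorm]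
  · simp [inner_smul_right, hJ_inner]

/-- A curve of directions misses some unit vector `e` of a space of dimension at least three, so
the reflection exchanging `e` and `v t / ‖v t‖` is defined and transports `eᗮ` to `(v t)ᗮ`. -/
theorem exists_isTransverseFrame_of_two_lt_finrank [FiniteDimensional ℝ Z] (hn : 1 ≤ n)
    (hv : ContDiff ℝ n v) (hEZ : finrank ℝ E = finrank ℝ Z + 1) (hE : 2 < finrank ℝ E) :
    ∃ (A : ℝ → Z →L[ℝ] E) (ℓ : ℝ → E →L[ℝ] ℝ) (C : ℝ≥0), IsTransverseFrame n v A ℓ C := by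
  have : Fact (finrank ℝ E = finrank ℝ Z + 1) := ⟨hEZ⟩
  have : FiniteDimensional ℝ E := .of_finrank_eq_succ hEZ
  obtain ⟨e, he, hve⟩ := exists_norm_eq_one_forall_smul_ne (hv.of_le hn)
    (by rwa [finrank_self])
  have he_ne : e ≠ 0 := norm_ne_zero_iff.1 (by simp [he])
  let B : Z ≃L[ℝ] (ℝ ∙ e)ᗮ := .ofFinrankEq (Submodule.finrank_orthogonal_span_singleton he_ne).symm
  let w (t : ℝ) : E := ‖v t‖⁻¹ • v t - e
  let R (t : ℝ) : E ≃ₗᵢ[ℝ] E := (ℝ ∙ w t)ᗮ.reflection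
  have hw (t : ℝ) : w t ≠ 0 := sub_ne_zero.2 (hve _ t)
  have hR {t : ℝ} (ht : v t ≠ 0) : R t (v t) = ‖v t‖ • e := by
    have hunit : ‖‖v t‖⁻¹ • v t‖ = ‖e‖ := by simp [norm_smul, ht, he]
    rw [← Submodule.reflection_sub hunit, ← map_smul, smul_inv_smul₀ (norm_ne_zero_iff.2 ht)]
  let P : Z →L[ℝ] E := (ℝ ∙ e)ᗮ.subtypeL ∘L (B : Z →L[ℝ] (ℝ ∙ e)ᗮ)
  refine ⟨fun t => ‖v t‖ • ((R t : E →L[ℝ] E) ∘L P), _, _, isTransverseFrame_of_inner_eq_zero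
    (C := ‖P‖₊) (fun t ht => ?_) (fun t ht => ?_) (fun t _ => ?_) (fun t ht z => ?_)⟩
  · have hnorm := hv.contDiffAt.norm ℝ ht
    exact hnorm.smul ((contDiffAt_reflection_orthogonal_span_singleton
      (((hnorm.inv (norm_ne_zero_iff.2 ht)).smul hv.contDiffAt).sub contDiffAt_const)
      (hw t)).clm_comp contDiffAt_const)
  · exact (smul_right_injective E (norm_ne_zero_iff.2 ht)).comp
      ((R t).injective.comp (Subtype.val_injective.comp B.injective))
  · rw [norm_smul, norm_norm, mul_comm, coe_nnnorm]
    gcongr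
    exact ContinuousLinearMap.opNorm_le_bound _ (norm_nonneg P)
      fun z => ((R t).norm_map (P z)).trans_le (P.le_opNorm z)
  · have hperp : inner ℝ e (P z) = 0 := Submodule.mem_orthogonal_singleton_iff_inner_right.1 (B z).2
    have hv_eq : v t = R t (‖v t‖ • e) := by
      rw [← hR ht]
      exact (Submodule.reflection_reflection _ _).symm
    have : inner ℝ (v t) (R t (P z)) = 0 := by
      rw [hv_eq, (R t).inner_map_map, inner_smul_left, hperp, mul_zero]
    simp [inner_smul_right, this]

theorem exists_isTransverseFrame_of_innerProductSpace [FiniteDimensional ℝ Z] (hn : 1 ≤ n)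
    (hv : ContDiff ℝ n v) (hEZ : finrank ℝ E = finrank ℝ Z + 1) :
    ∃ (A : ℝ → Z →L[ℝ] E) (ℓ : ℝ → E →L[ℝ] ℝ) (C : ℝ≥0), IsTransverseFrame n v A ℓ C := by
  obtain hZ | hZ | hZ : finrank ℝ Z = 0 ∨ finrank ℝ Z = 1 ∨ 1 < finrank ℝ Z := by omega
  · have : Subsingleton Z := finrank_zero_iff.1 hZ
    exact ⟨0, _, _, isTransverseFrame_of_inner_eq_zero (C := 0) (fun t _ => contDiffAt_const)
      (fun t _ => Function.injective_of_subsingleton _) (by simp) (by simp)⟩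
  · exact exists_isTransverseFrame_of_finrank_eq_two hv (by omega) hZ
  · exact exists_isTransverseFrame_of_two_lt_finrank hn hv hEZ (by omega)

theorem exists_isTransverseFrame {V : Type*} [NormedAddCommGroup V] [NormedSpace ℝ V]
    [FiniteDimensional ℝ V] [FiniteDimensional ℝ Z] (hn : 1 ≤ n) {v : ℝ → V}
    (hv : ContDiff ℝ n v) (hVZ : finrank ℝ V = finrank ℝ Z + 1) :
    ∃ (A : ℝ → Z →L[ℝ] V) (ℓ : ℝ → V →L[ℝ] ℝ) (C : ℝ≥0), IsTransverseFrame n v A ℓ C := by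
  obtain ⟨A, ℓ, C, h⟩ := exists_isTransverseFrame_of_innerProductSpace (Z := Z) hn
    ((toEuclidean (E := V)).contDiff.comp hv) (by rwa [finrank_euclideanSpace_fin])
  have hmap := h.map (toEuclidean (E := V)).symm
  simp only [Function.comp_apply, ContinuousLinearEquiv.symm_apply_apply] at hmap
  exact ⟨_, _, _, hmap⟩

end Frame

section Cutoff

theorem exists_contDiff_hasCompactSupport_eqOn {E G : Type*} [NormedAddCommGroup E]
    [NormedSpace ℝ E] [FiniteDimensional ℝ E] [NormedAddCommGroup G] [NormedSpace ℝ G] {n : ℕ∞}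
    {f : E → G} (hf : ContDiff ℝ n f) {s : Set E} (hs : Bornology.IsBounded s) :
    ∃ f' : E → G, ContDiff ℝ n f' ∧ HasCompactSupport f' ∧ EqOn f' f s := by
  obtain ⟨R, hR, hsR⟩ := hs.subset_closedBall_lt 0 0
  let χ : ContDiffBump (0 : E) := ⟨R, R + 1, hR, lt_add_one R⟩
  refine ⟨fun x => χ x • f x, χ.contDiff.smul hf, χ.hasCompactSupport.smul_right, fun x hx => ?_⟩
  simp only [χ.one_of_mem_closedBall (hsR hx), one_smul]

end Cutoff

section TimeFrozen

/-- The vector field `(t, x) ↦ (0, g (t, x))` on space-time, whose flow follows `g` in the space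
variable with the time variable frozen. -/
def timeFrozen {V : Type*} (g : ℝ × V → V) (p : ℝ × V) : ℝ × V := (0, g p)

variable {V : Type u} [NormedAddCommGroup V] {g : ℝ × V → V}

theorem lipschitzWith_timeFrozen {K : ℝ≥0} (hK : LipschitzWith K g) :
    LipschitzWith K (timeFrozen g) :=
  ((LipschitzWith.prodMk_left (0 : ℝ)).comp hK).weaken (one_mul K).le

variable [NormedSpace ℝ V] {φ : ℝ → ℝ × V → ℝ × V}

theorem IsGlobalFlow.fst_map_timeFrozen (hφ : IsGlobalFlow (timeFrozen g) φ) (s : ℝ)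
    (p : ℝ × V) : (φ s p).1 = p.1 := by
  have hderiv (r : ℝ) : HasDerivAt (fun r => (φ r p).1) 0 r :=
    (ContinuousLinearMap.fst ℝ ℝ V).hasFDerivAt.comp_hasDerivAt r (hφ.isIntegralCurve p r)
  rw [is_const_of_deriv_eq_zero (fun r => (hderiv r).differentiableAt) (fun r => (hderiv r).deriv)
    s 0, hφ.map_zero]

end TimeFrozen

section Slice

namespace IsGlobalFlow

variable {E : Type*} [NormedAddCommGroup E] [NormedSpace ℝ E]
  {F : E → E} {φ : ℝ → E → E} {K : ℝ≥0}

theorem strictMonoOn_of_forall_pos (hφ : IsGlobalFlow F φ) (ℓ : E →L[ℝ] ℝ) {p : E}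
    {D : Set ℝ} (hD : Convex ℝ D) (hpos : ∀ r ∈ D, 0 < ℓ (F (φ r p))) :
    StrictMonoOn (fun r => ℓ (φ r p)) D := by
  have hderiv (r : ℝ) : HasDerivAt (fun r => ℓ (φ r p)) (ℓ (F (φ r p))) r :=
    ℓ.hasFDerivAt.comp_hasDerivAt r (hφ.isIntegralCurve p r)
  exact strictMonoOn_of_deriv_pos hD (HasDerivAt.continuousOn fun r _ => hderiv r)
    fun r hr => (hderiv r).deriv ▸ hpos r (interior_subset hr)

theorem eq_of_map_eq_of_le (hφ : IsGlobalFlow F φ) (hK : LipschitzWith K F) (ℓ : E →L[ℝ] ℝ)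
    {p p' : E} (hℓ : ℓ p = ℓ p') {s s' : ℝ} (hpos : ∀ r ∈ Icc 0 s, 0 < ℓ (F (φ r p)))
    (hs' : 0 ≤ s') (hle : s' ≤ s) (h : φ s p = φ s' p') : s = s' ∧ p = p' := by
  have hback : φ (s - s') p = p' := by
    rw [sub_eq_neg_add, hφ.map_add hK, h, ← hφ.map_add hK, neg_add_cancel, hφ.map_zero]
  have hmono := hφ.strictMonoOn_of_forall_pos ℓ (convex_Icc 0 s) hpos
  have hzero : s - s' = 0 := hmono.injOn ⟨by linarith, by linarith⟩ ⟨le_rfl, hs'.trans hle⟩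
    (by simp only [hback, hφ.map_zero, hℓ])
  rw [hzero, hφ.map_zero] at hback
  exact ⟨by linarith, hback⟩

theorem eq_of_map_eq (hφ : IsGlobalFlow F φ) (hK : LipschitzWith K F) (ℓ : E →L[ℝ] ℝ)
    {p p' : E} (hℓ : ℓ p = ℓ p') {η s s' : ℝ} (hpos : ∀ r ∈ Ico 0 η, 0 < ℓ (F (φ r p)))
    (hpos' : ∀ r ∈ Ico 0 η, 0 < ℓ (F (φ r p'))) (hs : s ∈ Ico 0 η) (hs' : s' ∈ Ico 0 η)
    (h : φ s p = φ s' p') : s = s' ∧ p = p' := by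
  rcases le_total s' s with hle | hle
  · exact hφ.eq_of_map_eq_of_le hK ℓ hℓ (fun r hr => hpos r ⟨hr.1, hr.2.trans_lt hs.2⟩) hs'.1 hle h
  · exact (hφ.eq_of_map_eq_of_le hK ℓ hℓ.symm (fun r hr => hpos' r ⟨hr.1, hr.2.trans_lt hs'.2⟩)
      hs.1 hle h.symm).imp Eq.symm Eq.symm

end IsGlobalFlow

end Slice

section FlowBox

variable {V : Type u} [NormedAddCommGroup V] [NormedSpace ℝ V]
  {Z : Type*} [NormedAddCommGroup Z] [NormedSpace ℝ Z]

/-- The straightening map `(t, s, z) ↦ φ_s (t, x₀ + A_t z)`: follow the flow `φ` for time `s` from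
the point with coordinate `z` of the slice through `(t, x₀)` parametrized by `A t`. -/
def flowBox (φ : ℝ → ℝ × V → ℝ × V) (x₀ : V) (A : ℝ → Z →L[ℝ] V) (q : ℝ × ℝ × Z) : ℝ × V :=
  φ q.2.1 (q.1, x₀ + A q.1 q.2.2)

variable {g : ℝ × V → V} {φ : ℝ → ℝ × V → ℝ × V} {x₀ : V} {A : ℝ → Z →L[ℝ] V}
  {ℓ : ℝ → V →L[ℝ] ℝ} {K C : ℝ≥0} {n : WithTop ℕ∞}

theorem contDiffAt_flowBox (hφ : ContDiff ℝ n (Function.uncurry φ)) {q : ℝ × ℝ × Z}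
    (hA : ContDiffAt ℝ n A q.1) : ContDiffAt ℝ n (flowBox φ x₀ A) q := by
  have hslice : ContDiffAt ℝ n (fun q : ℝ × ℝ × Z => (q.1, x₀ + A q.1 q.2.2)) q :=
    contDiffAt_fst.prodMk (contDiffAt_const.add
      ((hA.comp q contDiffAt_fst).clm_apply contDiffAt_snd.snd))
  exact hφ.contDiffAt.comp q (contDiffAt_snd.fst.prodMk hslice)

theorem IsGlobalFlow.norm_flowBox_sub_le (hφ : IsGlobalFlow (timeFrozen g) φ)
    (hK : LipschitzWith K g) {t : ℝ} (hA : ‖A t‖ ≤ C * ‖g (t, x₀)‖) {η s : ℝ} {z : Z}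
    (hη : K * η ≤ 1) (hs : s ∈ Ico 0 η) (hz : ‖z‖ ≤ η) :
    ‖flowBox φ x₀ A (t, s, z) - (t, x₀)‖ ≤ (3 * C + 2) * η * ‖g (t, x₀)‖ := by
  have hKs : K * s ≤ 1 := (by gcongr; exact hs.2.le : (K * s : ℝ) ≤ K * η).trans hη
  have hstart : ‖(t, x₀ + A t z) - (t, x₀)‖ ≤ C * ‖g (t, x₀)‖ * η := by
    have := (A t).le_of_opNorm_le_of_le hA hz
    simpa [Prod.norm_def] using this
  have hfield : ‖timeFrozen g (t, x₀)‖ = ‖g (t, x₀)‖ := by simp [timeFrozen, Prod.norm_def]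
  calc ‖φ s (t, x₀ + A t z) - (t, x₀)‖
      ≤ 3 * ‖(t, x₀ + A t z) - (t, x₀)‖ + 2 * (‖timeFrozen g (t, x₀)‖ * s) :=
        (hφ.norm_sub_le_gronwallBound (lipschitzWith_timeFrozen hK) hs.1 _ _).trans
          (gronwallBound_le_of_mul_le_one (norm_nonneg _) K.2 (norm_nonneg _) hs.1 hKs)
    _ ≤ 3 * (C * ‖g (t, x₀)‖ * η) + 2 * (‖g (t, x₀)‖ * η) := by
        rw [hfield]
        gcongr
        exact hs.2.le
    _ = (3 * C + 2) * η * ‖g (t, x₀)‖ := by ring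

theorem IsTransverseFrame.coord_pos (hA : IsTransverseFrame n (fun t => g (t, x₀)) A ℓ C)
    (hK : LipschitzWith K g) {t : ℝ} (ht : g (t, x₀) ≠ 0) {c : ℝ} (hc : C * K * c < 1)
    {p : ℝ × V} (hp : ‖p - (t, x₀)‖ ≤ c * ‖g (t, x₀)‖) : 0 < ℓ t (g p) := by
  have hv : 0 < ‖g (t, x₀)‖ := norm_pos_iff.2 ht
  have hc_nonneg : 0 ≤ c := nonneg_of_mul_nonneg_left ((norm_nonneg _).trans hp) hv
  have hdist : |ℓ t (g p) - 1| < 1 := by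
    calc |ℓ t (g p) - 1| = ‖ℓ t (g p - g (t, x₀))‖ := by
          rw [map_sub, hA.coord_self t ht, Real.norm_eq_abs]
      _ ≤ ‖ℓ t‖ * (K * (c * ‖g (t, x₀)‖)) := (ℓ t).le_opNorm_of_le
          ((hK.norm_sub_le _ _).trans (by gcongr))
      _ = ‖ℓ t‖ * ‖g (t, x₀)‖ * (K * c) := by ring
      _ ≤ C * (K * c) := by gcongr; exact hA.norm_coord_mul_le t ht
      _ < 1 := by rwa [← mul_assoc]
  linarith [(abs_lt.1 hdist).1]

theorem exists_pos_forall_flowBox_mem_ball (hφ : IsGlobalFlow (timeFrozen g) φ)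
    (hK : LipschitzWith K g) {M : ℝ≥0} (hM : ∀ p, ‖g p‖ ≤ M)
    (hA : IsTransverseFrame n (fun t => g (t, x₀)) A ℓ C) {ρ : ℝ} (hρ : 0 < ρ) :
    ∃ η > 0, ∀ t, g (t, x₀) ≠ 0 → ∀ s ∈ Ico 0 η, ∀ z ∈ Metric.ball (0 : Z) η,
      flowBox φ x₀ A (t, s, z) ∈ Metric.ball (t, x₀) ρ ∧
        0 < ℓ t (g (flowBox φ x₀ A (t, s, z))) := by
  have hsmall (a : ℝ) {b : ℝ} (hb : 0 < b) : ∀ᶠ η : ℝ in 𝓝[>] 0, a * η < b :=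
    Filter.Eventually.filter_mono nhdsWithin_le_nhds
      (((continuous_const_mul a).tendsto' 0 0 (mul_zero a)).eventually_lt_const hb)
  obtain ⟨η, hηK, hηρ, hηC, (hη : 0 < η)⟩ :=
    ((hsmall K one_pos).and ((hsmall ((3 * C + 2) * M) hρ).and
      ((hsmall (C * K * (3 * C + 2)) one_pos).and self_mem_nhdsWithin))).exists
  refine ⟨η, hη, fun t ht s hs z hz => ?_⟩
  have hclose := hφ.norm_flowBox_sub_le hK (hA.norm_le t ht) hηK.le hs (mem_ball_zero_iff.1 hz).le
  refine ⟨mem_ball_iff_norm.2 ?_, hA.coord_pos hK ht (by linarith) hclose⟩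
  calc _ ≤ (3 * C + 2) * η * M := hclose.trans (by gcongr; exact hM _)
    _ < ρ := by linarith

theorem injOn_flowBox (hφ : IsGlobalFlow (timeFrozen g) φ) (hK : LipschitzWith K g)
    (hA : IsTransverseFrame n (fun t => g (t, x₀)) A ℓ C) {T : Set ℝ} {η : ℝ} {D : Set Z}
    (hT : ∀ t ∈ T, g (t, x₀) ≠ 0)
    (hpos : ∀ t ∈ T, ∀ s ∈ Ico 0 η, ∀ z ∈ D, 0 < ℓ t (g (flowBox φ x₀ A (t, s, z)))) :
    InjOn (flowBox φ x₀ A) (T ×ˢ Ico 0 η ×ˢ D) := by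
  rintro ⟨t, s, z⟩ ⟨ht, hs, hz⟩ ⟨t', s', z'⟩ ⟨ht', hs', hz'⟩ h
  obtain rfl : t = t' := by
    simpa only [flowBox, hφ.fst_map_timeFrozen] using congrArg Prod.fst h
  have hcoord (z : Z) : ℓ t (A t z) = 0 := DFunLike.congr_fun (hA.coord_comp t (hT t ht)) z
  obtain ⟨rfl, hstart⟩ := hφ.eq_of_map_eq (p := (t, x₀ + A t z)) (p' := (t, x₀ + A t z'))
    (lipschitzWith_timeFrozen hK) (ℓ t ∘L ContinuousLinearMap.snd ℝ ℝ V) (by simp [hcoord])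
    (hpos t ht · · z hz) (hpos t ht · · z' hz') hs hs' h
  have hz_eq : A t z = A t z' := add_left_cancel (congrArg Prod.snd hstart)
  rw [hA.injective t (hT t ht) hz_eq]

theorem injective_fderiv_flowBox (hφ : IsGlobalFlow (timeFrozen g) φ) (hK : LipschitzWith K g)
    (hd : Differentiable ℝ (Function.uncurry φ)) {q : ℝ × ℝ × Z} (hA : DifferentiableAt ℝ A q.1)
    (hA_inj : Function.Injective (A q.1)) (ℓ : V →L[ℝ] ℝ) (hℓA : ℓ ∘L A q.1 = 0)
    (hℓg : ℓ (g (q.1, x₀ + A q.1 q.2.2)) ≠ 0) :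
    Function.Injective (fderiv ℝ (flowBox φ x₀ A) q) := by
  have htime : HasFDerivAt (fun q : ℝ × ℝ × Z => q.2.1) _ q :=
    (ContinuousLinearMap.fst ℝ ℝ Z ∘L .snd ℝ ℝ (ℝ × Z)).hasFDerivAt
  have hz : HasFDerivAt (fun q : ℝ × ℝ × Z => q.2.2) _ q :=
    (ContinuousLinearMap.snd ℝ ℝ Z ∘L .snd ℝ ℝ (ℝ × Z)).hasFDerivAt
  have hslice : HasFDerivAt (fun q : ℝ × ℝ × Z => (q.1, x₀ + A q.1 q.2.2)) _ q :=
    hasFDerivAt_fst.prodMk (((hA.hasFDerivAt.comp q hasFDerivAt_fst).clm_apply hz).const_add x₀)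
  have hbox : HasFDerivAt (flowBox φ x₀ A) _ q :=
    HasFDerivAt.comp (g := Function.uncurry φ) q (hd _).hasFDerivAt (htime.prodMk hslice)
  refine (injective_iff_map_eq_zero _).2 fun h hh => ?_
  have hkernel := hφ.smul_add_eq_zero_of_hasFDerivAt (lipschitzWith_timeFrozen hK) hd htime hslice
    hbox.differentiableAt.hasFDerivAt hh
  obtain ⟨ht, hx⟩ : h.1 = 0 ∧ h.2.1 • g (q.1, x₀ + A q.1 q.2.2) + A q.1 h.2.2 = 0 := by
    have ht : h.1 = 0 := by simpa [timeFrozen] using congrArg Prod.fst hkernel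
    exact ⟨ht, by simpa [timeFrozen, ht] using congrArg Prod.snd hkernel⟩
  have hs : h.2.1 = 0 := by
    have hcoord : ℓ (A q.1 h.2.2) = 0 := DFunLike.congr_fun hℓA h.2.2
    simpa [hcoord, hℓg] using congrArg ℓ hx
  have hz : h.2.2 = 0 := hA_inj (by simpa [hs] using hx)
  exact Prod.ext ht (Prod.ext hs hz)

/-- `Λ (t, s, z)`, restricted to `S`, is a `C^n` diffeomorphism onto an open set which preserves the
time variable `t` and straightens `(0, g)` into `∂_s`. The inverse is recorded as a total map,
smooth on the image. -/
structure IsFlowBox (n : WithTop ℕ∞) (g : ℝ × V → V) (Λ : ℝ × ℝ × Z → ℝ × V)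
    (S : Set (ℝ × ℝ × Z)) : Prop where
  contDiffOn : ContDiffOn ℝ n Λ S
  isOpen_image : IsOpen (Λ '' S)
  exists_leftInvOn : ∃ Φ, ContDiffOn ℝ n Φ (Λ '' S) ∧ LeftInvOn Φ Λ S
  fst_eq : ∀ q ∈ S, (Λ q).1 = q.1
  hasDerivAt : ∀ q ∈ S, HasDerivAt (fun s => Λ (q.1, s, q.2.2)) (timeFrozen g (Λ q)) q.2.1

namespace IsFlowBox

variable {Λ : ℝ × ℝ × Z → ℝ × V} {S : Set (ℝ × ℝ × Z)}

theorem injOn (h : IsFlowBox n g Λ S) : InjOn Λ S :=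
  h.exists_leftInvOn.elim fun _ hΦ => hΦ.2.injOn

theorem congr_field (h : IsFlowBox n g Λ S) {g' : ℝ × V → V} (hg : EqOn g g' (Λ '' S)) :
    IsFlowBox n g' Λ S where
  __ := h
  hasDerivAt q hq := by simpa only [timeFrozen, hg (mem_image_of_mem Λ hq)] using h.hasDerivAt q hq

theorem deriv_comp (h : IsFlowBox n g Λ S) {q : ℝ × ℝ × Z} (hq : q ∈ S) {y : ℝ × V → ℝ}
    (hy : DifferentiableAt ℝ y (Λ q)) :
    deriv (fun s => y (Λ (q.1, s, q.2.2))) q.2.1 = fderiv ℝ y (Λ q) (0, g (Λ q)) :=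
  (hy.hasFDerivAt.comp_hasDerivAt q.2.1 (h.hasDerivAt q hq)).deriv

end IsFlowBox

open Module

variable [FiniteDimensional ℝ V] [FiniteDimensional ℝ Z]

theorem isFlowBox_flowBox (hVZ : finrank ℝ V = finrank ℝ Z + 1) (hn : n ≠ 0)
    (hφ : IsGlobalFlow (timeFrozen g) φ) (hK : LipschitzWith K g)
    (hφ' : ContDiff ℝ n (Function.uncurry φ))
    (hA : IsTransverseFrame n (fun t => g (t, x₀)) A ℓ C) {T : Set ℝ} {η : ℝ} {D : Set Z}
    (hTo : IsOpen T) (hD : IsOpen D) (hT : ∀ t ∈ T, g (t, x₀) ≠ 0)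
    (hpos : ∀ t ∈ T, ∀ s ∈ Ico 0 η, ∀ z ∈ D, 0 < ℓ t (g (flowBox φ x₀ A (t, s, z)))) :
    IsFlowBox n g (flowBox φ x₀ A) (T ×ˢ (Ioo 0 η ×ˢ D)) := by
  have hsmooth : ContDiffOn ℝ n (flowBox φ x₀ A) (T ×ˢ (Ioo 0 η ×ˢ D)) := fun q hq =>
    (contDiffAt_flowBox hφ' (hA.contDiffAt _ (hT _ hq.1))).contDiffWithinAt
  have hinj : InjOn (flowBox φ x₀ A) (T ×ˢ (Ioo 0 η ×ˢ D)) :=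
    (injOn_flowBox hφ hK hA hT hpos).mono (prod_mono_right (prod_mono_left Ioo_subset_Ico_self))
  have hfderiv : ∀ q ∈ T ×ˢ (Ioo 0 η ×ˢ D), (fderiv ℝ (flowBox φ x₀ A) q).IsInvertible := by
    intro q hq
    have ht := hT _ hq.1
    have hstart : 0 < ℓ q.1 (g (q.1, x₀ + A q.1 q.2.2)) := by
      simpa only [flowBox, hφ.map_zero] using
        hpos _ hq.1 0 ⟨le_rfl, hq.2.1.1.trans hq.2.1.2⟩ _ hq.2.2
    exact isInvertible_of_injective_of_finrank_eq (by simp [hVZ, add_comm])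
      (injective_fderiv_flowBox hφ hK (hφ'.differentiable hn)
        ((hA.contDiffAt _ ht).differentiableAt hn) (hA.injective _ ht) (ℓ q.1)
        (hA.coord_comp _ ht) hstart.ne')
  obtain ⟨hopen, hinv⟩ := isOpen_image_and_exists_contDiffOn_leftInvOn hn
    (hTo.prod (isOpen_Ioo.prod hD)) hsmooth hinj hfderiv
  exact ⟨hsmooth, hopen, hinv, fun q _ => hφ.fst_map_timeFrozen _ _,
    fun q _ => hφ.isIntegralCurve (q.1, x₀ + A q.1 q.2.2) q.2.1⟩

theorem exists_isFlowBox_of_hasCompactSupport (hVZ : finrank ℝ V = finrank ℝ Z + 1) {n : ℕ∞}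
    (hn : 1 ≤ n) (hg : ContDiff ℝ n g) (hsupp : HasCompactSupport g) {T : Set ℝ}
    (hT : IsOpen T) (hne : ∀ t ∈ T, g (t, x₀) ≠ 0) {ρ : ℝ} (hρ : 0 < ρ) :
    ∃ η > 0, ∃ Λ, IsFlowBox n g Λ (T ×ˢ (Ioo 0 η ×ˢ Metric.ball (0 : Z) η)) ∧
      MapsTo Λ (T ×ˢ (Ioo 0 η ×ˢ Metric.ball 0 η)) (T ×ˢ Metric.ball x₀ ρ) := by
  have hn' : (1 : WithTop ℕ∞) ≤ n := by exact_mod_cast hn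
  have hn₀ : (n : WithTop ℕ∞) ≠ 0 := (zero_lt_one.trans_le hn').ne'
  obtain ⟨K, hK⟩ := hg.lipschitzWith_of_hasCompactSupport hsupp hn₀
  obtain ⟨M, hM⟩ : ∃ M : ℝ≥0, ∀ p, ‖g p‖ ≤ M :=
    (hsupp.exists_bound_of_continuous hg.continuous).imp' Real.toNNReal
      fun M hM p => (hM p).trans (Real.le_coe_toNNReal M)
  have hF : ContDiff ℝ n (timeFrozen g) := contDiff_const.prodMk hg
  have hF_lip : LipschitzWith K (timeFrozen g) := lipschitzWith_timeFrozen hK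
  obtain ⟨φ, hφ⟩ := exists_isGlobalFlow_of_lipschitzWith_of_norm_le (hF.of_le hn') hF_lip
    (M := M) (by simpa [timeFrozen, Prod.norm_def] using hM)
  obtain ⟨A, ℓ, C, hA⟩ := exists_isTransverseFrame (Z := Z) hn'
    (hg.comp (contDiff_id.prodMk contDiff_const : ContDiff ℝ n fun t : ℝ => (t, x₀))) hVZ
  obtain ⟨η, hη, hbox⟩ := exists_pos_forall_flowBox_mem_ball hφ hK hM hA hρ
  have hΛ := isFlowBox_flowBox hVZ hn₀ hφ hK
    (hφ.contDiff_uncurry (zero_lt_one.trans_le hn).ne' hF hF_lip) hA hT Metric.isOpen_ball hne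
    fun t ht s hs z hz => (hbox t (hne t ht) s hs z hz).2
  refine ⟨η, hη, flowBox φ x₀ A, hΛ, fun q hq => ⟨(hΛ.fst_eq q hq).symm ▸ hq.1, ?_⟩⟩
  have hball := (hbox q.1 (hne _ hq.1) _ ⟨hq.2.1.1.le, hq.2.1.2⟩ _ hq.2.2).1
  rw [← ball_prod_same] at hball
  exact hball.2

end FlowBox

theorem stmt_15_general {V : Type u} [NormedAddCommGroup V] [NormedSpace ℝ V]
    [FiniteDimensional ℝ V] {Z : Type*} [NormedAddCommGroup Z] [NormedSpace ℝ Z]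
    [FiniteDimensional ℝ Z] (hVZ : Module.finrank ℝ V = Module.finrank ℝ Z + 1) {n : ℕ∞}
    (hn : 1 ≤ n) {T : Set ℝ} (hT : IsOpen T) (hTb : Bornology.IsBounded T) {ω : Set V} {x₀ : V}
    (hω : ω ∈ 𝓝 x₀) {g : ℝ × V → V} (hg : ContDiff ℝ n g) (hgne : ∀ t ∈ T, g (t, x₀) ≠ 0) :
    ∃ (U : Set Z) (ε : ℝ) (Λ : ℝ × ℝ × Z → ℝ × V) (W : Set (ℝ × V)),
      IsOpen U ∧ U.Nonempty ∧ 0 < ε ∧ IsOpen W ∧ W ⊆ T ×ˢ ω ∧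
      ContDiffOn ℝ n Λ (T ×ˢ (Ioo 0 ε ×ˢ U)) ∧ InjOn Λ (T ×ˢ (Ioo 0 ε ×ˢ U)) ∧
      Λ '' (T ×ˢ (Ioo 0 ε ×ˢ U)) = W ∧
      (∃ Φ, ContDiffOn ℝ n Φ W ∧ ∀ q ∈ T ×ˢ (Ioo 0 ε ×ˢ U), Φ (Λ q) = q) ∧
      (∀ q ∈ T ×ˢ (Ioo 0 ε ×ˢ U), (Λ q).1 = q.1) ∧
      ∀ y : ℝ × V → ℝ, ContDiff ℝ 1 y → ∀ q ∈ T ×ˢ (Ioo 0 ε ×ˢ U),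
        deriv (fun s => y (Λ (q.1, s, q.2.2))) q.2.1 = fderiv ℝ y (Λ q) (0, g (Λ q)) := by
  obtain ⟨ρ, hρ, hρω⟩ := Metric.mem_nhds_iff.1 hω
  obtain ⟨g', hg', hsupp, hgg'⟩ :=
    exists_contDiff_hasCompactSupport_eqOn hg (hTb.prod (Metric.isBounded_ball (x := x₀) (r := ρ)))
  have hne : ∀ t ∈ T, g' (t, x₀) ≠ 0 := fun t ht => by
    rw [hgg' ⟨ht, Metric.mem_ball_self hρ⟩]
    exact hgne t ht
  obtain ⟨η, hη, Λ, hΛ', hmem⟩ := exists_isFlowBox_of_hasCompactSupport hVZ hn hg' hsupp hT hne hρ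
  have hΛ := hΛ'.congr_field (hgg'.mono hmem.image_subset)
  exact ⟨Metric.ball 0 η, η, Λ, _, Metric.isOpen_ball, Metric.nonempty_ball.2 hη, hη,
    hΛ.isOpen_image, hmem.image_subset.trans (prod_mono_right hρω), hΛ.contDiffOn, hΛ.injOn, rfl,
    hΛ.exists_leftInvOn, hΛ.fst_eq,
    fun y hy q hq => hΛ.deriv_comp hq (hy.differentiable one_ne_zero _)⟩

theorem stmt_15 (N k : ℕ) (hN : 1 ≤ N) (hk : 1 ≤ k)
    (t₀ t₁ : ℝ) (ht : t₀ < t₁)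
    (ω₀ : Set (Fin N → ℝ)) (hω₀ : IsOpen ω₀) (hω₀ne : ω₀.Nonempty)
    (g : ℝ × (Fin N → ℝ) → (Fin N → ℝ)) (hg : ContDiff ℝ (k : ℕ∞) g)
    (hgne : ∀ p ∈ (Set.Ioo t₀ t₁) ×ˢ ω₀, g p ≠ 0) :
    ∃ (U : Set (Fin (N - 1) → ℝ)) (ε : ℝ)
      (Λ : ℝ × ℝ × (Fin (N - 1) → ℝ) → ℝ × (Fin N → ℝ))
      (W : Set (ℝ × (Fin N → ℝ))),
      IsOpen U ∧ U.Nonempty ∧ 0 < ε ∧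
      IsOpen W ∧ W ⊆ (Set.Ioo t₀ t₁) ×ˢ ω₀ ∧
      -- (i) Λ is a C^k diffeomorphism from (t₀,t₁)×(0,ε)×U onto W
      ContDiffOn ℝ (k : ℕ∞) Λ ((Set.Ioo t₀ t₁) ×ˢ ((Set.Ioo (0:ℝ) ε) ×ˢ U)) ∧
      Set.InjOn Λ ((Set.Ioo t₀ t₁) ×ˢ ((Set.Ioo (0:ℝ) ε) ×ˢ U)) ∧
      Λ '' ((Set.Ioo t₀ t₁) ×ˢ ((Set.Ioo (0:ℝ) ε) ×ˢ U)) = W ∧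
      (∃ Φ : ℝ × (Fin N → ℝ) → ℝ × ℝ × (Fin (N - 1) → ℝ),
        ContDiffOn ℝ (k : ℕ∞) Φ W ∧
        ∀ q ∈ (Set.Ioo t₀ t₁) ×ˢ ((Set.Ioo (0:ℝ) ε) ×ˢ U), Φ (Λ q) = q) ∧
      -- (ii) the time component of Λ(t,s,z) is t
      (∀ q ∈ (Set.Ioo t₀ t₁) ×ˢ ((Set.Ioo (0:ℝ) ε) ×ˢ U), (Λ q).1 = q.1) ∧
      -- (iii) ∂ₛ(y ∘ Λ) = g(Λ)·∇ₓy(Λ)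
      (∀ y : ℝ × (Fin N → ℝ) → ℝ, ContDiff ℝ 1 y →
        ∀ q ∈ (Set.Ioo t₀ t₁) ×ˢ ((Set.Ioo (0:ℝ) ε) ×ˢ U),
          deriv (fun s => y (Λ (q.1, s, q.2.2))) q.2.1
            = fderiv ℝ y (Λ q) (0, g (Λ q))) := by
  obtain ⟨x₀, hx₀⟩ := hω₀ne
  exact stmt_15_general (by simp only [Module.finrank_fin_fun, Nat.sub_add_cancel hN])
    (by exact_mod_cast hk) isOpen_Ioo (Metric.isBounded_Ioo t₀ t₁) (hω₀.mem_nhds hx₀) hg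
    fun t ht => hgne (t, x₀) ⟨ht, hx₀⟩
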